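/- For every finite A ⊆ F_p with 2 ≤ |A| ≤ p^{1/2}, the multiplicative energy satisfies E^×(A,A)⁴ ≤ C·|A|⁵·|A−A|⁵·|A+A−A−A| for an absolute constant C. -/

import Mathlib

open Finset Pointwise

/-- Multiplicative energy of `Y` and `Z`. -/
def paperMulEnergy {p : ℕ} (Y Z : Finset (ZMod p)) : ℕ :=
  ∑ x ∈ Y, ∑ y ∈ Y, ((Z.image (x * ·)) ∩ (Z.image (y * ·))).card

/-- **Plünnecke's inequality** for two different summands, with a factor of four. -/
lemma exists_subset_card_add_add_mul_sq_le {G : Type*} [AddCommGroup G] [DecidableEq G]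
    (U V W : Finset G) (hU : U.Nonempty) :
    ∃ X ⊆ U, X.Nonempty ∧ (V + X + W).card * U.card ^ 2 ≤
      4 * X.card * ((U + V).card * (U + W).card) := by
  set m := (U + V).card with hm
  set n := (U + W).card with hn
  rcases V.eq_empty_or_nonempty with rfl | hV
  · exact ⟨U, Subset.rfl, hU, by simp⟩
  rcases W.eq_empty_or_nonempty with rfl | hW
  · exact ⟨U, Subset.rfl, hU, by simp⟩
  have hm0 : 0 < m := (hU.add hV).card_pos
  have hn0 : 0 < n := (hU.add hW).card_pos
  have hU0 : 0 < U.card := hU.card_pos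
  set B : Finset (G × ℤ) :=
    V ×ˢ Finset.Ico (0 : ℤ) n ∪ W ×ˢ Finset.Ico (n : ℤ) (n + m) with hB
  have hcard (Y : Finset G) : (Y ×ˢ ({0} : Finset ℤ) + B).card
      = n * (Y + V).card + m * (Y + W).card := by
    rw [hB, add_union, product_add_product_comm, product_add_product_comm, singleton_zero,
      zero_add, zero_add, card_union_of_disjoint]
    · simp [card_product, mul_comm]
    · rw [disjoint_left]
      rintro ⟨g, k⟩ h1 h2
      simp only [mem_product, mem_Ico] at h1 h2
      omega
  obtain ⟨X, hX, hmin⟩ := exists_min_image (U.powerset.filter (·.Nonempty))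
    (fun Y => ((n * (Y + V).card + m * (Y + W).card : ℕ) : ℚ) / Y.card)
    ⟨U, by simpa using hU⟩
  simp only [mem_filter, mem_powerset] at hX hmin
  obtain ⟨hXU, hXne⟩ := hX
  have hX0 : 0 < X.card := hXne.card_pos
  have hmin' (Y : Finset G) (hY : Y ⊆ U) :
      (n * (X + V).card + m * (X + W).card) * Y.card ≤
        (n * (Y + V).card + m * (Y + W).card) * X.card := by
    rcases Y.eq_empty_or_nonempty with rfl | hYne
    · simp
    have h := hmin Y ⟨hY, hYne⟩
    have hY0 : 0 < Y.card := hYne.card_pos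
    rw [div_le_div_iff₀ (by exact_mod_cast hX0) (by exact_mod_cast hY0)] at h
    exact_mod_cast h
  have hpet (C : Finset G) :
      (n * (C + X + V).card + m * (C + X + W).card) * X.card ≤
        (n * (X + V).card + m * (X + W).card) * (C + X).card := by
    have h := pluennecke_petridis_inequality_add (A := X ×ˢ ({0} : Finset ℤ)) (B := B)
      (C ×ˢ ({0} : Finset ℤ)) (by
        intro A' hA'
        obtain ⟨Y, rfl⟩ : ∃ Y : Finset G, A' = Y ×ˢ ({0} : Finset ℤ) := by
          refine ⟨A'.image Prod.fst, ?_⟩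
          ext ⟨g, k⟩
          simp only [mem_product, mem_image, mem_singleton, Prod.exists, exists_and_right,
            exists_eq_right]
          constructor
          · intro h
            have := hA' h
            simp only [mem_product, mem_singleton] at this
            exact ⟨⟨k, h⟩, this.2⟩
          · rintro ⟨⟨j, h⟩, rfl⟩
            have := hA' h
            simp only [mem_product, mem_singleton] at this
            rw [← this.2]; exact h
        have hYX : Y ⊆ X := fun g hg =>
          
          (mem_product.1 (hA' ((mem_product (p := (g, 0))).2 ⟨hg, mem_singleton_self 0⟩))).1
        rw [hcard, hcard]
        simpa using hmin' Y (hYX.trans hXU))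
    rw [product_add_product_comm, singleton_add_singleton, add_zero, hcard, hcard] at h
    simpa using h
  set K := n * (X + V).card + m * (X + W).card
  have h0 : K * U.card ≤ 2 * m * n * X.card := by
    have := hmin' U Subset.rfl
    rw [← hm, ← hn] at this
    linarith
  have h1 : m * (V + X + W).card * X.card ≤ K * (V + X).card :=
    le_trans (Nat.mul_le_mul_right _ (Nat.le_add_left _ _)) (hpet V)
  have h2 : n * (V + X).card ≤ K := by
    rw [add_comm V X]; exact Nat.le_add_right _ _
  refine ⟨X, hXU, hXne, ?_⟩
  have h3 : (m * n * X.card) * ((V + X + W).card * U.card ^ 2) ≤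
      (m * n * X.card) * (4 * X.card * (m * n)) := by
    calc (m * n * X.card) * ((V + X + W).card * U.card ^ 2)
        = n * (m * (V + X + W).card * X.card) * U.card ^ 2 := by ring
      _ ≤ n * (K * (V + X).card) * U.card ^ 2 := by gcongr
      _ = K * (n * (V + X).card) * U.card ^ 2 := by ring
      _ ≤ K * K * U.card ^ 2 := by gcongr
      _ = (K * U.card) ^ 2 := by ring
      _ ≤ (2 * m * n * X.card) ^ 2 := by gcongr
      _ = _ := by ring
  exact Nat.le_of_mul_le_mul_left h3 (by positivity)

/-- Cauchy–Schwarz: the size of an image is bounded below by the number of collisions. -/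
lemma card_sq_le_card_image_mul_card_collisions {α β : Type*} [DecidableEq β]
    (s : Finset α) (f : α → β) :
    s.card ^ 2 ≤ (s.image f).card * ((s ×ˢ s).filter fun q => f q.1 = f q.2).card := by
  classical
  have h : ((s ×ˢ s).filter fun q => f q.1 = f q.2).card =
      ∑ b ∈ s.image f, (s.filter fun a => f a = b).card ^ 2 := by
    rw [card_eq_sum_card_fiberwise (f := fun q => f q.1) (t := s.image f)]
    · refine sum_congr rfl fun b _ => ?_
      rw [sq, ← card_product]
      congr 1
      ext ⟨x, y⟩
      simp only [mem_filter, mem_product]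
      grind
    · intro q hq
      simp only [coe_filter, mem_product, Set.mem_ofPred_eq] at hq
      simpa using ⟨q.1, hq.1.1, rfl⟩
  rw [h]
  conv_lhs => rw [card_eq_sum_card_image f s]
  exact sq_sum_le_card_mul_sum_sq

lemma exists_card_collisions_le {F : Type*} [Field F] [Fintype F] [DecidableEq F]
    (B : Finset F) (hB : B.card ^ 2 ≤ Fintype.card F) :
    ∃ r : F, (((B ×ˢ B) ×ˢ (B ×ˢ B)).filter
      fun q => q.1.1 + r * q.1.2 = q.2.1 + r * q.2.2).card ≤ 2 * B.card ^ 2 := by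
  obtain ⟨r, -, hr⟩ : ∃ r ∈ (univ : Finset F), (((B ×ˢ B) ×ˢ (B ×ˢ B)).filter
      fun q => q.1.1 + r * q.1.2 = q.2.1 + r * q.2.2).card ≤ 2 * B.card ^ 2 := by
    refine exists_le_of_sum_le univ_nonempty ?_
    have h : ∑ r : F, (((B ×ˢ B) ×ˢ (B ×ˢ B)).filter
        fun q => q.1.1 + r * q.1.2 = q.2.1 + r * q.2.2).card =
        ∑ q ∈ (B ×ˢ B) ×ˢ (B ×ˢ B),
          (univ.filter fun r : F => q.1.1 + r * q.1.2 = q.2.1 + r * q.2.2).card :=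
      sum_card_bipartiteAbove_eq_sum_card_bipartiteBelow _
    rw [h]
    calc _ ≤ ∑ q ∈ (B ×ˢ B) ×ˢ (B ×ˢ B), (1 + if q.1 = q.2 then Fintype.card F else 0) := by
          refine sum_le_sum fun q _ => ?_
          split_ifs with hq
          · exact (card_le_univ _).trans (Nat.le_add_left _ _)
          · rw [add_zero, card_le_one]
            intro r hr s hs
            simp only [mem_filter, mem_univ, true_and] at hr hs
            have hmul : (r - s) * (q.1.2 - q.2.2) = 0 := by linear_combination hr - hs
            rcases mul_eq_zero.1 hmul with h0 | h0
            · exact sub_eq_zero.1 h0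
            · refine absurd (Prod.ext ?_ (sub_eq_zero.1 h0)) hq
              linear_combination hr - r * h0
      _ = B.card ^ 4 + B.card ^ 2 * Fintype.card F := by
          rw [sum_add_distrib, ← sum_filter, sum_const, sum_const]
          have : (((B ×ˢ B) ×ˢ (B ×ˢ B)).filter fun q => q.1 = q.2) = (B ×ˢ B).diag := by
            ext; simp only [mem_filter, mem_diag, mem_product]; grind
          rw [this, diag_card]
          simp only [card_product, smul_eq_mul]
          ring
      _ ≤ _ := by
          rw [sum_const, card_univ, smul_eq_mul]
          nlinarith
  exact ⟨r, hr⟩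

lemma ZMod.forall_of_sub_one {p : ℕ} [NeZero p] {P : ZMod p → Prop} (h0 : P 0)
    (h : ∀ r, P r → P (r - 1)) (r : ZMod p) : P r := by
  have key (n : ℕ) : P (-(n : ZMod p)) := by
    induction n with
    | zero => simpa using h0
    | succ n ih =>
      have := h _ ih
      rwa [show -((n : ZMod p)) - 1 = -((n + 1 : ℕ) : ZMod p) by push_cast; ring] at this
  simpa using key (-r).val

lemma card_cube_le_of_sub_one_not_quotient {F : Type*} [Field F] [DecidableEq F]
    {B U : Finset F} {r : F}
    (hr : ∀ a ∈ B, ∀ b ∈ B, ∀ c ∈ B, ∀ d ∈ B, c ≠ d → r - 1 ≠ (a - b) / (c - d))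
    (hUB : U ⊆ B) :
    U.card ^ 3 ≤ 4 * (B - B).card * ((U ×ˢ U).image fun q => q.1 + r * q.2).card := by
  rcases U.eq_empty_or_nonempty with rfl | hU
  · simp
  obtain ⟨X, hXU, hX, hcard⟩ :=
    exists_subset_card_add_add_mul_sq_le U (U.image (r * ·)) (-U) hU
  have hinj : X.card * U.card ≤ (U.image (r * ·) + X + -U).card := by
    rw [← card_product]
    refine card_le_card_of_injOn (fun q => r * q.2 + q.1 + -q.2) ?_ ?_
    · rintro ⟨x, v⟩ hq
      simp only [coe_product, Set.mem_prod, mem_coe] at hq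
      exact add_mem_add (add_mem_add (mem_image_of_mem _ hq.2) hq.1) (neg_mem_neg hq.2)
    · rintro ⟨x, v⟩ hq ⟨x', v'⟩ hq' heq
      simp only [coe_product, Set.mem_prod, mem_coe] at hq hq' heq
      have hv : v = v' := by
        by_contra hne
        refine hr x' (hUB (hXU hq'.1)) x (hUB (hXU hq.1)) v (hUB hq.2) v' (hUB hq'.2) hne ?_
        rw [eq_div_iff (sub_ne_zero.2 hne)]
        linear_combination heq
      subst hv
      simpa using heq
  have himg : U + U.image (r * ·) = (U ×ˢ U).image fun q => q.1 + r * q.2 := by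
    ext z
    simp only [mem_add, mem_image, mem_product, Prod.exists]
    grind
  have hsub : (U + -U).card ≤ (B - B).card := by
    rw [← sub_eq_add_neg]
    exact card_le_card (sub_subset_sub hUB hUB)
  rw [himg] at hcard
  refine Nat.le_of_mul_le_mul_left (c := X.card) ?_ hX.card_pos
  calc X.card * U.card ^ 3 = X.card * U.card * U.card ^ 2 := by ring
    _ ≤ _ := Nat.mul_le_mul_right _ hinj
    _ ≤ _ := hcard
    _ ≤ 4 * X.card * (((U ×ˢ U).image fun q => q.1 + r * q.2).card * (B - B).card) := by gcongr
    _ = _ := by ring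

lemma exists_ratio_card_cube_le {p : ℕ} [Fact p.Prime] (B : Finset (ZMod p))
    (hB : 2 ≤ B.card) (hBp : B.card ^ 2 ≤ p) :
    ∃ a ∈ B, ∃ b ∈ B, ∃ c ∈ B, ∃ d ∈ B, c ≠ d ∧ ∀ U ⊆ B, B.card ≤ 2 * U.card →
      B.card ^ 3 ≤ 32 * (B - B).card *
        ((U ×ˢ U).image fun q => q.1 + (a - b) / (c - d) * q.2).card := by
  by_cases hR : ∀ r : ZMod p, ∃ a ∈ B, ∃ b ∈ B, ∃ c ∈ B, ∃ d ∈ B, c ≠ d ∧ r = (a - b) / (c - d)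
  · obtain ⟨r, hr⟩ := exists_card_collisions_le B (by rwa [ZMod.card])
    obtain ⟨a, ha, b, hb, c, hc, d, hd, hcd, rfl⟩ := hR r
    refine ⟨a, ha, b, hb, c, hc, d, hd, hcd, fun U hUB hU => ?_⟩
    set f : ZMod p × ZMod p → ZMod p := fun q => q.1 + (a - b) / (c - d) * q.2
    have h1 := card_sq_le_card_image_mul_card_collisions (U ×ˢ U) f
    have h2 : (((U ×ˢ U) ×ˢ (U ×ˢ U)).filter fun q => f q.1 = f q.2).card ≤ 2 * B.card ^ 2 := by
      refine le_trans (card_le_card ?_) hr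
      gcongr
    have h3 : B.card ≤ (B - B).card := by
      obtain ⟨x, hx⟩ : B.Nonempty := card_pos.1 (by omega)
      exact card_le_card_sub_right ⟨x, hx⟩
    have h4 : B.card ^ 2 ≤ 32 * ((U ×ˢ U).image f).card := by
      refine Nat.le_of_mul_le_mul_left (c := B.card ^ 2) ?_ (by positivity)
      rw [card_product] at h1
      calc B.card ^ 2 * B.card ^ 2 = B.card ^ 4 := by ring
        _ ≤ (2 * U.card) ^ 4 := by gcongr
        _ = 16 * (U.card * U.card) ^ 2 := by ring
        _ ≤ 16 * (((U ×ˢ U).image f).card * (2 * B.card ^ 2)) := by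
            gcongr; exact h1.trans (by gcongr)
        _ = _ := by ring
    calc B.card ^ 3 = B.card * B.card ^ 2 := by ring
      _ ≤ (B - B).card * (32 * ((U ×ˢ U).image f).card) := by gcongr
      _ = _ := by ring
  · obtain ⟨r, ⟨a, ha, b, hb, c, hc, d, hd, hcd, rfl⟩, hr⟩ : ∃ r : ZMod p,
        (∃ a ∈ B, ∃ b ∈ B, ∃ c ∈ B, ∃ d ∈ B, c ≠ d ∧ r = (a - b) / (c - d)) ∧
        ¬ ∃ a ∈ B, ∃ b ∈ B, ∃ c ∈ B, ∃ d ∈ B, c ≠ d ∧ r - 1 = (a - b) / (c - d) := by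
      by_contra! hcon
      refine hR (ZMod.forall_of_sub_one ?_ fun r hr => ?_)
      · obtain ⟨x, hx, y, hy, hxy⟩ := one_lt_card.1 (show 1 < B.card by omega)
        exact ⟨x, hx, x, hx, x, hx, y, hy, hxy, by simp⟩
      · obtain ⟨a, ha, b, hb, c, hc, d, hd, hcd, h⟩ := hr
        exact hcon r ⟨a, ha, b, hb, c, hc, d, hd, hcd, h⟩
    push Not at hr
    refine ⟨a, ha, b, hb, c, hc, d, hd, hcd, fun U hUB hU => ?_⟩
    have h := card_cube_le_of_sub_one_not_quotient hr hUB
    calc B.card ^ 3 ≤ (2 * U.card) ^ 3 := by gcongr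
      _ = 8 * U.card ^ 3 := by ring
      _ ≤ _ := Nat.mul_le_mul_left 8 h
      _ = _ := by ring

/-- A few translates of a subset `Y` of the dilate `a • A` cover most of `a • B`. -/
lemma exists_card_mul_le_and_translates_cover {F : Type*} [Field F] [Fintype F] [DecidableEq F]
    {A B Y : Finset F} {a : F} {m : ℕ} (hm : 0 < m) (hBA : B ⊆ A)
    (hYA : Y ⊆ A.image (a * ·)) (hmY : m ≤ Y.card) :
    ∃ T : Finset F, T.card * m ≤ 8 * (A - A).card ∧
      8 * (B.filter fun x => a * x ∉ T + Y).card ≤ B.card := by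
  rcases B.eq_empty_or_nonempty with rfl | hB
  · exact ⟨∅, by simp, by simp⟩
  have hB0 := hB.card_pos
  obtain ⟨T, hT, hmax⟩ := exists_max_image (univ.filter fun T : Finset F =>
    T.card * (B.card * m) ≤ 8 * (B.filter fun x => a * x ∈ T + Y).card * (A - A).card) card
    ⟨∅, by simp⟩
  simp only [mem_filter, mem_univ, true_and] at hT hmax
  refine ⟨T, ?_, ?_⟩
  · refine Nat.le_of_mul_le_mul_left (c := B.card) ?_ hB0
    calc B.card * (T.card * m) = T.card * (B.card * m) := by ring
      _ ≤ _ := hT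
      _ ≤ 8 * B.card * (A - A).card := by gcongr; exact filter_subset _ _
      _ = _ := by ring
  by_contra! hlt
  set R := B.filter fun x => a * x ∉ T + Y with hR
  have hR0 : 0 < R.card := by omega
  set D := (A - A).image (a * ·) with hD
  have hDcard : D.card ≤ (A - A).card := card_image_le
  have hmaps : ∀ q ∈ R ×ˢ Y, a * q.1 - q.2 ∈ D := by
    rintro ⟨x, y⟩ hq
    rw [mem_product] at hq
    obtain ⟨z, hz, hzy⟩ := mem_image.1 (hYA hq.2)
    refine mem_image.2 ⟨x - z, sub_mem_sub (hBA (mem_filter.1 hq.1).1) hz, ?_⟩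
    simp only at hzy ⊢
    rw [← hzy]; ring
  obtain ⟨x₀, hx₀⟩ := card_pos.1 hR0
  obtain ⟨y₀, hy₀⟩ := card_pos.1 (hm.trans_le hmY)
  obtain ⟨t, -, ht⟩ : ∃ t ∈ D, (R ×ˢ Y).card ≤
      D.card * ((R ×ˢ Y).filter fun q => a * q.1 - q.2 = t).card := by
    refine exists_le_of_sum_le ⟨_, hmaps (x₀, y₀) (mk_mem_product hx₀ hy₀)⟩ ?_
    rw [sum_const, smul_eq_mul, ← mul_sum, ← card_eq_sum_card_fiberwise hmaps]
  have hfib : ((R ×ˢ Y).filter fun q => a * q.1 - q.2 = t).card ≤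
      (R.filter fun x => a * x ∈ {t} + Y).card := by
    refine card_le_card_of_injOn Prod.fst ?_ ?_
    · rintro ⟨x, y⟩ hq
      simp only [coe_filter, mem_product, Set.mem_ofPred_eq] at hq ⊢
      refine ⟨hq.1.1, mem_add.2 ⟨t, mem_singleton_self t, y, hq.1.2, ?_⟩⟩
      rw [← hq.2]; ring
    · rintro ⟨x, y⟩ hq ⟨x', y'⟩ hq' hxx
      simp only [coe_filter, mem_product, Set.mem_ofPred_eq] at hq hq' hxx
      subst hxx
      refine Prod.ext rfl ?_
      linear_combination hq'.2 - hq.2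
  set G := R.filter fun x => a * x ∈ {t} + Y with hG
  have hgain : R.card * m ≤ G.card * (A - A).card := by
    rw [card_product] at ht
    calc R.card * m ≤ R.card * Y.card := by gcongr
      _ ≤ _ := ht
      _ ≤ (A - A).card * G.card := by gcongr
      _ = _ := mul_comm _ _
  have hG0 : 0 < G.card := by
    have : 0 < G.card * (A - A).card := (Nat.mul_pos hR0 hm).trans_le hgain
    exact Nat.pos_of_mul_pos_right this
  have htT : t ∉ T := by
    intro htT
    obtain ⟨x, hx⟩ := card_pos.1 hG0
    obtain ⟨hxR, hxt⟩ := mem_filter.1 hx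
    exact (mem_filter.1 hxR).2 (add_subset_add_right (singleton_subset_iff.2 htT) hxt)
  have hnew : (B.filter fun x => a * x ∈ T + Y).card + G.card ≤
      (B.filter fun x => a * x ∈ insert t T + Y).card := by
    rw [← card_union_of_disjoint]
    · refine card_le_card fun x hx => ?_
      rcases mem_union.1 hx with hx | hx
      · obtain ⟨hxB, hxT⟩ := mem_filter.1 hx
        exact mem_filter.2 ⟨hxB, add_subset_add_right (subset_insert _ _) hxT⟩
      · obtain ⟨hxR, hxt⟩ := mem_filter.1 hx
        exact mem_filter.2 ⟨(mem_filter.1 hxR).1,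
          add_subset_add_right (singleton_subset_iff.2 (mem_insert_self _ _)) hxt⟩
    · rw [disjoint_left]
      intro x hx hxG
      exact (mem_filter.1 (mem_filter.1 hxG).1).2 (mem_filter.1 hx).2
  have := hmax (insert t T) (by
    rw [card_insert_of_notMem htT]
    calc (T.card + 1) * (B.card * m) = T.card * (B.card * m) + B.card * m := by ring
      _ ≤ 8 * (B.filter fun x => a * x ∈ T + Y).card * (A - A).card + 8 * R.card * m := by
          gcongr
      _ ≤ 8 * (B.filter fun x => a * x ∈ T + Y).card * (A - A).card +
          8 * (G.card * (A - A).card) := by rw [mul_assoc 8 R.card]; gcongr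
      _ = 8 * ((B.filter fun x => a * x ∈ T + Y).card + G.card) * (A - A).card := by ring
      _ ≤ _ := by gcongr)
  rw [card_insert_of_notMem htT] at this
  omega

/-- A level-set bound for multiplicities of dilates: if each dilate `x • A`, `x ∈ B`, meets
`b • A` in at least `m` points, then `m` and `B` cannot both be large. -/
lemma pow_mul_card_cube_le {p : ℕ} [Fact p.Prime] {A B : Finset (ZMod p)} (b : ZMod p) (m : ℕ)
    (hAp : A.card ^ 2 ≤ p) (hBA : B ⊆ A)
    (hm : ∀ x ∈ B, m ≤ ((A.image (x * ·)) ∩ (A.image (b * ·))).card) :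
    m ^ 4 * B.card ^ 3 ≤ 2 ^ 17 * ((A - A).card ^ 5 * (A + A - A - A).card) := by
  rcases B.eq_empty_or_nonempty with rfl | hBne
  · simp
  obtain ⟨x₀, hx₀⟩ := hBne
  have hA : A.Nonempty := ⟨x₀, hBA hx₀⟩
  have hAA : A.card ≤ (A - A).card := card_le_card_sub_right hA
  rcases Nat.lt_or_ge B.card 2 with hB1 | hB2
  · have hm' : m ≤ (A - A).card :=
      (hm x₀ hx₀).trans <| (card_le_card inter_subset_left).trans <| card_image_le.trans hAA
    have h4 : 0 < (A + A - A - A).card := (((hA.add hA).sub hA).sub hA).card_pos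
    have h0 : 0 < (A - A).card := (hA.sub hA).card_pos
    calc m ^ 4 * B.card ^ 3 ≤ (A - A).card ^ 4 * 1 ^ 3 := by gcongr; omega
      _ ≤ (A - A).card ^ 5 * (A + A - A - A).card := by
          rw [one_pow, pow_succ _ 4]
          nlinarith [Nat.mul_le_mul (Nat.mul_le_mul_left ((A - A).card ^ 4) h0) h4]
      _ ≤ _ := Nat.le_mul_of_pos_left _ (by positivity)
  rcases Nat.eq_zero_or_pos m with rfl | hm0
  · simp
  obtain ⟨a, ha, a', ha', c, hc, c', hc', hcc, hpiv⟩ := exists_ratio_card_cube_le B hB2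
    (le_trans (by gcongr) hAp)
  have hcov (x : ZMod p) (hx : x ∈ B) : ∃ T : Finset (ZMod p), T.card * m ≤ 8 * (A - A).card ∧
      8 * (B.filter fun y => x * y ∉ T + A.image (b * ·)).card ≤ B.card := by
    obtain ⟨T, hT, hTc⟩ := exists_card_mul_le_and_translates_cover hm0 hBA
      inter_subset_left (hm x hx)
    refine ⟨T, hT, le_trans (Nat.mul_le_mul_left 8 (card_le_card ?_)) hTc⟩
    exact monotone_filter_right _ fun y _ hy h =>
      hy (add_subset_add_left inter_subset_right h)
  obtain ⟨T₁, hT₁, hU₁⟩ := hcov a ha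
  obtain ⟨T₂, hT₂, hU₂⟩ := hcov a' ha'
  obtain ⟨T₃, hT₃, hU₃⟩ := hcov c hc
  obtain ⟨T₄, hT₄, hU₄⟩ := hcov c' hc'
  set Z := A.image (b * ·) with hZ
  set U := B.filter fun y => a * y ∈ T₁ + Z ∧ a' * y ∈ T₂ + Z ∧ c * y ∈ T₃ + Z ∧ c' * y ∈ T₄ + Z
    with hU
  have hBU : B.card ≤ 2 * U.card := by
    have : B ⊆ U ∪ ((B.filter fun y => a * y ∉ T₁ + Z) ∪ (B.filter fun y => a' * y ∉ T₂ + Z) ∪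
        ((B.filter fun y => c * y ∉ T₃ + Z) ∪ (B.filter fun y => c' * y ∉ T₄ + Z))) := by
      intro y hy
      simp only [hU, mem_union, mem_filter, hy, true_and]
      tauto
    have h1 := (card_le_card this).trans (card_union_le _ _)
    have h2 := card_union_le ((B.filter fun y => a * y ∉ T₁ + Z) ∪
      (B.filter fun y => a' * y ∉ T₂ + Z))
      ((B.filter fun y => c * y ∉ T₃ + Z) ∪ (B.filter fun y => c' * y ∉ T₄ + Z))
    have h3 := card_union_le (B.filter fun y => a * y ∉ T₁ + Z) (B.filter fun y => a' * y ∉ T₂ + Z)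
    have h4 := card_union_le (B.filter fun y => c * y ∉ T₃ + Z) (B.filter fun y => c' * y ∉ T₄ + Z)
    omega
  have hmain := hpiv U (filter_subset _ _) hBU
  have himg : ((U ×ˢ U).image fun q => q.1 + (a - a') / (c - c') * q.2).card ≤
      T₁.card * T₂.card * (T₃.card * T₄.card) * (A + A - A - A).card := by
    calc _ ≤ ((T₁ - T₂) + (T₃ - T₄) + (A + A - A - A).image (b * ·)).card := by
          refine card_le_card_of_injOn (fun z => (c - c') * z) ?_
            (mul_right_injective₀ (sub_ne_zero.2 hcc)).injOn
          intro z hz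
          obtain ⟨⟨x, y⟩, hxy, rfl⟩ := mem_image.1 hz
          obtain ⟨hx, hy⟩ := mem_product.1 hxy
          obtain ⟨-, -, -, hx₃, hx₄⟩ := mem_filter.1 hx
          obtain ⟨-, hy₁, hy₂, -, -⟩ := mem_filter.1 hy
          simp only [mem_add, hZ, mem_image, exists_exists_and_eq_and] at hx₃ hx₄ hy₁ hy₂
          obtain ⟨t₃, ht₃, w₃, hw₃, h₃⟩ := hx₃
          obtain ⟨t₄, ht₄, w₄, hw₄, h₄⟩ := hx₄
          obtain ⟨t₁, ht₁, w₁, hw₁, h₁⟩ := hy₁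
          obtain ⟨t₂, ht₂, w₂, hw₂, h₂⟩ := hy₂
          have : (c - c') * (x + (a - a') / (c - c') * y) =
              (t₁ - t₂) + (t₃ - t₄) + b * (w₁ + w₃ - w₂ - w₄) := by
            have hc0 := sub_ne_zero.2 hcc
            have : (c - c') * (x + (a - a') / (c - c') * y) =
              (c - c') * x + (a - a') * y := by field_simp
            rw [this]
            linear_combination h₄ + h₂ - h₁ - h₃
          simp only [this, mem_coe]
          exact add_mem_add (add_mem_add (sub_mem_sub ht₁ ht₂) (sub_mem_sub ht₃ ht₄))
            (mem_image_of_mem _ (sub_mem_sub (sub_mem_sub (add_mem_add hw₁ hw₃) hw₂) hw₄))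
      _ ≤ _ := by
          refine card_add_le.trans (Nat.mul_le_mul (card_add_le.trans ?_) card_image_le)
          exact Nat.mul_le_mul card_sub_le card_sub_le
  calc m ^ 4 * B.card ^ 3 ≤ m ^ 4 * (32 * (A - A).card *
        (T₁.card * T₂.card * (T₃.card * T₄.card) * (A + A - A - A).card)) := by
        refine Nat.mul_le_mul_left _ (hmain.trans ?_)
        gcongr
    _ = 32 * (A - A).card * (A + A - A - A).card *
        ((T₁.card * m) * (T₂.card * m) * ((T₃.card * m) * (T₄.card * m))) := by ring
    _ ≤ 32 * (A - A).card * (A + A - A - A).card *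
        ((8 * (A - A).card) * (8 * (A - A).card) * ((8 * (A - A).card) * (8 * (A - A).card))) := by
        gcongr
    _ = _ := by ring

/-- Summation of a weak-type bound `m ^ 4 * #{f ≥ m} ^ 3 ≤ K`, without logarithmic loss. -/
lemma sum_le_four_mul_of_level_sets {ι : Type*} [DecidableEq ι] (S : Finset ι) (f : ι → ℕ)
    (k : ℝ) (hk : 0 ≤ k)
    (h : ∀ T ⊆ S, ∀ m : ℕ, (∀ x ∈ T, m ≤ f x) → (m : ℝ) ^ 4 * (T.card : ℝ) ^ 3 ≤ k ^ 4) :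
    ∃ u : ℝ, 0 ≤ u ∧ u ^ 4 = S.card ∧ ∑ x ∈ S, (f x : ℝ) ≤ 4 * k * u := by
  induction S using Finset.induction_on_min_value f with
  | empty => exact ⟨0, by simp⟩
  | insert a S ha hmin ih =>
    obtain ⟨v, hv0, hv, hsum⟩ := ih fun T hT => h T (hT.trans (subset_insert _ _))
    have hlev := h (insert a S) Subset.rfl (f a) (by
      intro x hx
      rcases mem_insert.1 hx with rfl | hx
      · exact le_rfl
      · exact hmin x hx)
    set u : ℝ := ((insert a S).card : ℝ) ^ (1 / 4 : ℝ) with hu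
    have hu4 : u ^ 4 = (insert a S).card := by
      rw [hu, ← Real.rpow_natCast, ← Real.rpow_mul (by positivity)]
      norm_num
    have hu0 : 0 < u := Real.rpow_pos_of_pos (by simp) _
    refine ⟨u, hu0.le, hu4, ?_⟩
    rw [sum_insert ha]
    rw [← hu4] at hlev
    have huv : u ^ 4 = v ^ 4 + 1 := by
      rw [hu4, hv, card_insert_of_notMem ha]; push_cast; ring
    have hvu : v ≤ u := by
      refine le_of_pow_le_pow_left₀ (n := 4) (by norm_num) hu0.le ?_
      linarith
    have hfu : (f a : ℝ) * u ^ 3 ≤ k := by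
      refine le_of_pow_le_pow_left₀ (n := 4) (by norm_num) hk ?_
      calc ((f a : ℝ) * u ^ 3) ^ 4 = (f a : ℝ) ^ 4 * (u ^ 4) ^ 3 := by ring
        _ ≤ _ := hlev
    have hone : 1 ≤ 4 * u ^ 3 * (u - v) := by
      have h1 : (u - v) * (u ^ 3 + u ^ 2 * v + u * v ^ 2 + v ^ 3) = 1 := by
        linear_combination huv
      have h2 : u ^ 3 + u ^ 2 * v + u * v ^ 2 + v ^ 3 ≤ 4 * u ^ 3 := by
        have e1 : u ^ 2 * v ≤ u ^ 2 * u := by gcongr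
        have e2 : u * v ^ 2 ≤ u * u ^ 2 := by gcongr
        have e3 : v ^ 3 ≤ u ^ 3 := by gcongr
        nlinarith
      nlinarith [mul_le_mul_of_nonneg_left h2 (sub_nonneg.2 hvu)]
    have hfa : (f a : ℝ) ≤ 4 * k * (u - v) := by
      calc (f a : ℝ) ≤ f a * (4 * u ^ 3 * (u - v)) := le_mul_of_one_le_right (by positivity) hone
        _ = 4 * (f a * u ^ 3) * (u - v) := by ring
        _ ≤ 4 * k * (u - v) := by
            have := sub_nonneg.2 hvu
            gcongr
    linarith

theorem energy_bound_no_log :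
    ∃ C : ℝ, 0 < C ∧ ∀ (p : ℕ), p.Prime → ∀ A : Finset (ZMod p),
      2 ≤ A.card → (A.card : ℝ) ≤ Real.sqrt p →
      (paperMulEnergy A A : ℝ) ^ 4 ≤
        C * (A.card : ℝ) ^ 5 * ((A - A).card : ℝ) ^ 5 * ((A + A - A - A).card : ℝ) := by
  refine ⟨4 ^ 4 * 2 ^ 17, by norm_num, fun p hp A _ hAp => ?_⟩
  have : Fact p.Prime := ⟨hp⟩
  have hAp' : A.card ^ 2 ≤ p := by
    have := (Real.le_sqrt (by positivity) (by positivity)).1 hAp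
    exact_mod_cast this
  set M : ℝ := 2 ^ 17 * (((A - A).card : ℝ) ^ 5 * ((A + A - A - A).card : ℝ)) with hM
  have hroot (x : ℝ) (hx : 0 ≤ x) : (x ^ (1 / 4 : ℝ)) ^ 4 = x := by
    rw [← Real.rpow_natCast, ← Real.rpow_mul hx]
    norm_num
  have hM0 : 0 ≤ M := by positivity
  set k : ℝ := M ^ (1 / 4 : ℝ) with hk
  have hk4 : k ^ 4 = M := hroot M hM0
  have hk0 : 0 ≤ k := Real.rpow_nonneg hM0 _
  set v : ℝ := (A.card : ℝ) ^ (1 / 4 : ℝ) with hv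
  have hv4 : v ^ 4 = A.card := hroot _ (by positivity)
  have hv0 : 0 ≤ v := Real.rpow_nonneg (by positivity) _
  have hrow (b : ZMod p) :
      ∑ x ∈ A, (((A.image (x * ·)) ∩ (A.image (b * ·))).card : ℝ) ≤ 4 * k * v := by
    obtain ⟨u, hu0, hu4, hsum⟩ := sum_le_four_mul_of_level_sets A
      (fun x => ((A.image (x * ·)) ∩ (A.image (b * ·))).card) k hk0 (by
        intro T hT m hm
        rw [hk4, hM]
        exact_mod_cast pow_mul_card_cube_le b m hAp' hT hm)
    have : u = v := (pow_left_inj₀ hu0 hv0 (by norm_num : 4 ≠ 0)).1 (hu4.trans hv4.symm)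
    exact this ▸ hsum
  have hE : (paperMulEnergy A A : ℝ) ≤ A.card * (4 * k * v) := by
    rw [paperMulEnergy, sum_comm]
    push_cast
    calc _ ≤ ∑ b ∈ A, 4 * k * v := sum_le_sum fun b _ => hrow b
      _ = _ := by rw [sum_const, nsmul_eq_mul]
  calc (paperMulEnergy A A : ℝ) ^ 4 ≤ (A.card * (4 * k * v)) ^ 4 := by gcongr
    _ = (A.card : ℝ) ^ 4 * 4 ^ 4 * k ^ 4 * v ^ 4 := by ring
    _ = _ := by rw [hk4, hv4, hM]; ring
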